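/- Let (λ, u) be an eigenpair of the rate constant matrix K with ‖u‖_π = 1 and λ < 0, and let D = K_{TT} − K_{TS}K_{SS}⁻¹K_{ST}. For V of either Type A or B, ‖Vu‖_π ≤ ρ(D)/|λ|, where ρ(D) is the spectral radius of D. -/

import Mathlib

open Matrix BigOperators

/-- Assemble an `n × n` matrix from four blocks indexed by a set `S` and its complement. -/
def rcmcAssemble {n : ℕ} (S : Finset (Fin n))
    (ASS : Matrix ↥S ↥S ℝ) (AST : Matrix ↥S ↥(Sᶜ) ℝ)
    (ATS : Matrix ↥(Sᶜ) ↥S ℝ) (ATT : Matrix ↥(Sᶜ) ↥(Sᶜ) ℝ) :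
    Matrix (Fin n) (Fin n) ℝ := fun i j =>
  if hi : i ∈ S then
    if hj : j ∈ S then ASS ⟨i, hi⟩ ⟨j, hj⟩
    else AST ⟨i, hi⟩ ⟨j, Finset.mem_compl.mpr hj⟩
  else
    if hj : j ∈ S then ATS ⟨i, Finset.mem_compl.mpr hi⟩ ⟨j, hj⟩
    else ATT ⟨i, Finset.mem_compl.mpr hi⟩ ⟨j, Finset.mem_compl.mpr hj⟩

/-- The `π`-norm on `ℝⁿ`: `‖a‖_π = √(∑ i, a i² / π i)`. -/
noncomputable def pinorm {m : Type*} [Fintype m] (π : m → ℝ) (a : m → ℝ) : ℝ :=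
  Real.sqrt (∑ i, a i ^ 2 / π i)

/-!
Write `Ω = (-K_TS K_SS⁻¹, 1)`, with `π`-adjoint `Ω*`, so that `M = Ω Ω*` and `V = Ω* V_TT Ω`. Put
`x = Ω u` and `y = V_TT x`. Then `‖V u‖² = ‖Ω* y‖² = ⟨y, M y⟩`. In both types `V_TT = N⁻¹` with
`1 ≤ M ≤ N` as quadratic forms: for type B, `N = M`, and for type A, `N` is the diagonal of column
sums of `M`, which dominates `M` because the off-diagonal entries of `M` are nonnegative. Hence
`⟨y, M y⟩ ≤ ⟨y, N y⟩ ≤ ‖N y‖² = ‖x‖²`. Finally `Ω K = (0, D)` turns `K u = λ u` into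
`λ x = D u_T`, and the `π`-self-adjoint matrix `D` has operator norm `ρ(D)`.
-/

section WeightedInner

variable {ι κ : Type*} [Fintype ι] [Fintype κ]

/-- The inner product on `ℝ^ι` inducing `pinorm w`: weights divide, as in `pinorm`. -/
noncomputable def piInner (w a b : ι → ℝ) : ℝ := ∑ i, a i * b i / w i

theorem piInner_self_nonneg {w : ι → ℝ} (hw : ∀ i, 0 < w i) (a : ι → ℝ) :
    0 ≤ piInner w a a :=
  Finset.sum_nonneg fun i _ => div_nonneg (mul_self_nonneg _) (hw i).le

theorem pinorm_eq_sqrt_piInner (w a : ι → ℝ) : pinorm w a = √(piInner w a a) := by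
  simp only [pinorm, piInner, sq]

theorem pinorm_smul (w : ι → ℝ) (c : ℝ) (a : ι → ℝ) : pinorm w (c • a) = |c| * pinorm w a := by
  have hsum : ∑ i, (c • a) i ^ 2 / w i = c ^ 2 * ∑ i, a i ^ 2 / w i := by
    simp only [Pi.smul_apply, smul_eq_mul, mul_pow, mul_div_assoc, Finset.mul_sum]
  rw [pinorm, hsum, Real.sqrt_mul (sq_nonneg c), Real.sqrt_sq_eq_abs, pinorm]

theorem pinorm_eq_norm {w : ι → ℝ} (hw : ∀ i, 0 < w i) (a : ι → ℝ) :
    pinorm w a = ‖WithLp.toLp 2 fun i => a i / √(w i)‖ := by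
  simp only [EuclideanSpace.norm_eq, pinorm, Real.norm_eq_abs, sq_abs, div_pow,
    Real.sq_sqrt (hw _).le]

theorem pinorm_comp_equiv (w a : ι → ℝ) (e : κ ≃ ι) : pinorm (w ∘ e) (a ∘ e) = pinorm w a :=
  congrArg Real.sqrt (e.sum_comp fun i => a i ^ 2 / w i)

theorem piInner_sum_self (w a : ι ⊕ κ → ℝ) :
    piInner w a a = piInner (w ∘ Sum.inl) (a ∘ Sum.inl) (a ∘ Sum.inl) +
      piInner (w ∘ Sum.inr) (a ∘ Sum.inr) (a ∘ Sum.inr) :=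
  Fintype.sum_sum_type _

theorem piInner_comp_inr_self_le {w : ι ⊕ κ → ℝ} (hw : ∀ i, 0 < w i) (a : ι ⊕ κ → ℝ) :
    piInner (w ∘ Sum.inr) (a ∘ Sum.inr) (a ∘ Sum.inr) ≤ piInner w a a := by
  rw [piInner_sum_self]
  exact le_add_of_nonneg_left (piInner_self_nonneg (fun i => hw (.inl i)) _)

theorem pinorm_comp_inr_le {w : ι ⊕ κ → ℝ} (hw : ∀ i, 0 < w i) (a : ι ⊕ κ → ℝ) :
    pinorm (w ∘ Sum.inr) (a ∘ Sum.inr) ≤ pinorm w a := by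
  simpa only [pinorm_eq_sqrt_piInner] using Real.sqrt_le_sqrt (piInner_comp_inr_self_le hw a)

theorem two_mul_piInner_le {w : ι → ℝ} (hw : ∀ i, 0 < w i) (a b : ι → ℝ) :
    2 * piInner w a b ≤ piInner w a a + piInner w b b := by
  simp only [piInner, Finset.mul_sum, ← Finset.sum_add_distrib, ← mul_div_assoc, ← add_div]
  exact Finset.sum_le_sum fun i _ =>
    div_le_div_of_nonneg_right (by linarith [two_mul_le_add_sq (a i) (b i)]) (hw i).le

theorem isUnit_det_of_piInner_self_le [DecidableEq ι] {q : ι → ℝ} (hq : ∀ i, 0 < q i)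
    {N : Matrix ι ι ℝ} (hN : ∀ y, piInner q y y ≤ piInner q y (N *ᵥ y)) : IsUnit N.det := by
  rw [isUnit_iff_ne_zero, Ne, ← exists_mulVec_eq_zero_iff]
  rintro ⟨y, hy, hNy⟩
  have hnonneg : ∀ i, 0 ≤ y i * y i / q i := fun i => div_nonneg (mul_self_nonneg _) (hq i).le
  have hzero : piInner q y y = 0 :=
    le_antisymm ((hN y).trans_eq (by simp [piInner, hNy])) (piInner_self_nonneg hq y)
  refine hy (funext fun i => ?_)
  have hi := (Finset.sum_eq_zero_iff_of_nonneg fun i _ => hnonneg i).1 hzero i (Finset.mem_univ i)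
  simpa [(hq i).ne'] using hi

theorem piInner_inv_mulVec_le [DecidableEq ι] {q : ι → ℝ} (hq : ∀ i, 0 < q i)
    {M N : Matrix ι ι ℝ} (hM : ∀ y, piInner q y y ≤ piInner q y (M *ᵥ y))
    (hMN : ∀ y, piInner q y (M *ᵥ y) ≤ piInner q y (N *ᵥ y)) (x : ι → ℝ) :
    piInner q (N⁻¹ *ᵥ x) (M *ᵥ (N⁻¹ *ᵥ x)) ≤ piInner q x x := by
  have hN : IsUnit N.det := isUnit_det_of_piInner_self_le hq fun y => (hM y).trans (hMN y)
  have hx : N *ᵥ (N⁻¹ *ᵥ x) = x := by rw [mulVec_mulVec, mul_nonsing_inv _ hN, one_mulVec]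
  have hyM := hM (N⁻¹ *ᵥ x)
  have hyN := hMN (N⁻¹ *ᵥ x)
  have hsq := two_mul_piInner_le hq (N⁻¹ *ᵥ x) x
  rw [hx] at hyN
  linarith

end WeightedInner

section Adjoint

variable {ι κ μ : Type*}

/-- `X` and `Y` are adjoint for the inner products `piInner p` and `piInner q`. Stated without
division, so that `IsPiAdjoint π π K K` is detailed balance of `K` with respect to `π`. -/
def IsPiAdjoint (p : ι → ℝ) (q : κ → ℝ) (X : Matrix ι κ ℝ) (Y : Matrix κ ι ℝ) : Prop :=
  ∀ i j, X i j * q j = p i * Y j i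

theorem isPiAdjoint_iff [Fintype ι] [DecidableEq ι] [Fintype κ] [DecidableEq κ]
    {p : ι → ℝ} {q : κ → ℝ} {X : Matrix ι κ ℝ} {Y : Matrix κ ι ℝ} :
    IsPiAdjoint p q X Y ↔ X * diagonal q = diagonal p * Yᵀ := by
  simp only [IsPiAdjoint, ← Matrix.ext_iff, mul_diagonal, diagonal_mul, transpose_apply]

namespace IsPiAdjoint

variable {p : ι → ℝ} {q : κ → ℝ} {X : Matrix ι κ ℝ} {Y : Matrix κ ι ℝ}

theorem sub {X' : Matrix ι κ ℝ} {Y' : Matrix κ ι ℝ} (h : IsPiAdjoint p q X Y)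
    (h' : IsPiAdjoint p q X' Y') : IsPiAdjoint p q (X - X') (Y - Y') := fun i j => by
  rw [Matrix.sub_apply, Matrix.sub_apply, sub_mul, mul_sub, h, h']

theorem mul [Fintype κ] {r : μ → ℝ} {X' : Matrix κ μ ℝ} {Y' : Matrix μ κ ℝ}
    (h : IsPiAdjoint p q X Y) (h' : IsPiAdjoint q r X' Y') : IsPiAdjoint p r (X * X') (Y' * Y) := by
  intro i j
  simp only [mul_apply, Finset.sum_mul, Finset.mul_sum]
  refine Finset.sum_congr rfl fun k _ => ?_
  linear_combination X i k * h' k j + Y' j k * h i k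

theorem piInner_mulVec_left [Fintype ι] [Fintype κ] (h : IsPiAdjoint p q X Y)
    (hp : ∀ i, 0 < p i) (hq : ∀ i, 0 < q i) (a : κ → ℝ) (b : ι → ℝ) :
    piInner p (X *ᵥ a) b = piInner q a (Y *ᵥ b) := by
  simp only [piInner, mulVec, dotProduct, Finset.mul_sum, Finset.sum_mul, Finset.sum_div]
  rw [Finset.sum_comm]
  refine Finset.sum_congr rfl fun j _ => Finset.sum_congr rfl fun i _ => ?_
  rw [div_eq_div_iff (hp i).ne' (hq j).ne']
  linear_combination a j * b i * h i j

theorem inv [Fintype ι] [DecidableEq ι] {A : Matrix ι ι ℝ} (h : IsPiAdjoint p p A A)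
    (hA : IsUnit A.det) : IsPiAdjoint p p A⁻¹ A⁻¹ := by
  rw [isPiAdjoint_iff] at h ⊢
  calc A⁻¹ * diagonal p = A⁻¹ * (diagonal p * Aᵀ) * A⁻¹ᵀ := by
        rw [Matrix.mul_assoc, Matrix.mul_assoc, ← transpose_mul, nonsing_inv_mul _ hA,
          transpose_one, Matrix.mul_one]
    _ = diagonal p * A⁻¹ᵀ := by
        rw [← h, ← Matrix.mul_assoc, nonsing_inv_mul _ hA, Matrix.one_mul]

theorem symm (h : IsPiAdjoint p q X Y) : IsPiAdjoint q p Y X := fun j i => by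
  linear_combination -h i j

theorem nonneg_of_nonneg (h : IsPiAdjoint p q X Y) {i : ι} {j : κ} (hp : 0 < p i) (hq : 0 < q j)
    (hY : 0 ≤ Y j i) : 0 ≤ X i j :=
  nonneg_of_mul_nonneg_left ((h i j).symm ▸ mul_nonneg hp.le hY) hq

end IsPiAdjoint

end Adjoint

section SpectralRadius

variable {ι : Type*} [Fintype ι] [DecidableEq ι]

/-- The largest absolute value of a real eigenvalue of `D`, or `0` if there is none. For the
self-adjoint matrices considered here all eigenvalues are real, so this is the spectral radius. -/
noncomputable def realSpectralRadius (D : Matrix ι ι ℝ) : ℝ :=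
  sSup {r : ℝ | ∃ μ ∈ spectrum ℝ D, r = |μ|}

theorem realSpectralRadius_nonneg (D : Matrix ι ι ℝ) : 0 ≤ realSpectralRadius D :=
  Real.sSup_nonneg (by rintro _ ⟨μ, _, rfl⟩; exact abs_nonneg μ)

theorem abs_le_realSpectralRadius {D : Matrix ι ι ℝ} {μ : ℝ} (hμ : μ ∈ spectrum ℝ D) :
    |μ| ≤ realSpectralRadius D := by
  have himage : {r : ℝ | ∃ μ ∈ spectrum ℝ D, r = |μ|} = abs '' spectrum ℝ D := by
    ext r
    simp only [Set.mem_ofPred_eq, Set.mem_image, eq_comm]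
  refine le_csSup ?_ ⟨μ, hμ, rfl⟩
  rw [himage]
  exact (D.finite_real_spectrum.image _).bddAbove

open scoped Matrix.Norms.L2Operator in
theorem norm_le_realSpectralRadius {H : Matrix ι ι ℝ} (hH : H.IsHermitian) :
    ‖H‖ ≤ realSpectralRadius H := by
  have hcfc := norm_cfc_le (a := H) (realSpectralRadius_nonneg H)
    fun μ hμ => abs_le_realSpectralRadius hμ
  rwa [cfc_id' ℝ H hH.isSelfAdjoint] at hcfc

open scoped Matrix.Norms.L2Operator in
theorem norm_toLp_mulVec_le {H : Matrix ι ι ℝ} (hH : H.IsHermitian) (z : ι → ℝ) :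
    ‖WithLp.toLp 2 (H *ᵥ z)‖ ≤ realSpectralRadius H * ‖WithLp.toLp 2 z‖ :=
  (l2_opNorm_mulVec H (WithLp.toLp 2 z)).trans
    (mul_le_mul_of_nonneg_right (norm_le_realSpectralRadius hH) (norm_nonneg _))

theorem IsPiAdjoint.exists_isHermitian {q : ι → ℝ} (hq : ∀ i, 0 < q i) {D : Matrix ι ι ℝ}
    (hD : IsPiAdjoint q q D D) :
    ∃ H : Matrix ι ι ℝ, H.IsHermitian ∧ spectrum ℝ H = spectrum ℝ D ∧
      D * diagonal (fun i => √(q i)) = diagonal (fun i => √(q i)) * H := by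
  have hsqrt : ∀ i, √(q i) ≠ 0 := fun i => (Real.sqrt_pos.2 (hq i)).ne'
  obtain ⟨Q, hQ⟩ : IsUnit (diagonal fun i => √(q i)) :=
    isUnit_diagonal.2 (Pi.isUnit_iff.2 fun i => (hsqrt i).isUnit)
  let H : Matrix ι ι ℝ := (↑Q⁻¹ : Matrix ι ι ℝ) * D * (Q : Matrix ι ι ℝ)
  have hDH : D * diagonal (fun i => √(q i)) = diagonal (fun i => √(q i)) * H := by
    rw [← hQ, ← Matrix.mul_assoc, ← Matrix.mul_assoc, Units.mul_inv, Matrix.one_mul]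
  have hentry : ∀ i j, D i j * √(q j) = √(q i) * H i j := fun i j => by
    simpa only [mul_diagonal, diagonal_mul] using congrFun₂ hDH i j
  refine ⟨H, IsHermitian.ext fun i j => ?_, spectrum.units_conjugate', hDH⟩
  refine mul_left_cancel₀ (mul_ne_zero (hsqrt i) (hsqrt j)) ?_
  have hdb := hD i j
  rw [← Real.mul_self_sqrt (hq i).le, ← Real.mul_self_sqrt (hq j).le] at hdb
  rw [star_trivial]
  linear_combination √(q j) * hentry i j - √(q i) * hentry j i - hdb

theorem IsPiAdjoint.pinorm_mulVec_le {q : ι → ℝ} (hq : ∀ i, 0 < q i) {D : Matrix ι ι ℝ}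
    (hD : IsPiAdjoint q q D D) (y : ι → ℝ) :
    pinorm q (D *ᵥ y) ≤ realSpectralRadius D * pinorm q y := by
  obtain ⟨H, hH, hspec, hDH⟩ := hD.exists_isHermitian hq
  have hsqrt : ∀ i, √(q i) ≠ 0 := fun i => (Real.sqrt_pos.2 (hq i)).ne'
  set z : ι → ℝ := fun i => y i / √(q i) with hz
  have hy : diagonal (fun i => √(q i)) *ᵥ z = y := by
    ext i
    rw [mulVec_diagonal, hz, mul_div_cancel₀ _ (hsqrt i)]
  have hDy : (fun i => (D *ᵥ y) i / √(q i)) = H *ᵥ z := by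
    have hDQ : D *ᵥ y = diagonal (fun i => √(q i)) *ᵥ (H *ᵥ z) := by
      rw [mulVec_mulVec, ← hDH, ← mulVec_mulVec, hy]
    ext i
    rw [hDQ, mulVec_diagonal, mul_div_cancel_left₀ _ (hsqrt i)]
  calc pinorm q (D *ᵥ y) = ‖WithLp.toLp 2 (H *ᵥ z)‖ := by rw [pinorm_eq_norm hq, hDy]
    _ ≤ realSpectralRadius H * ‖WithLp.toLp 2 z‖ := norm_toLp_mulVec_le hH z
    _ = realSpectralRadius D * pinorm q y := by
        rw [pinorm_eq_norm hq, realSpectralRadius, hspec, realSpectralRadius]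

end SpectralRadius

section ColumnSums

variable {ι : Type*} [Fintype ι]

/-- The `j`-th column sum of `M`, as a function of `j`. -/
def colSum (M : Matrix ι ι ℝ) (j : ι) : ℝ := ∑ i, M i j

theorem dotProduct_mulVec_le_colSum [DecidableEq ι] {W : Matrix ι ι ℝ} (hW : W.IsSymm)
    (hoff : ∀ i j, i ≠ j → 0 ≤ W i j) (z : ι → ℝ) :
    z ⬝ᵥ W *ᵥ z ≤ z ⬝ᵥ diagonal (colSum W) *ᵥ z := by
  have hentry : ∀ i j, 2 * (z i * (W i j * z j)) ≤ W i j * z i ^ 2 + W i j * z j ^ 2 := by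
    intro i j
    obtain rfl | hij := eq_or_ne i j
    · exact le_of_eq (by ring)
    · linarith [mul_le_mul_of_nonneg_left (two_mul_le_add_sq (z i) (z j)) (hoff i j hij)]
  have hcol : ∑ i, ∑ j, W i j * z j ^ 2 = z ⬝ᵥ diagonal (colSum W) *ᵥ z := by
    rw [Finset.sum_comm]
    simp only [dotProduct, mulVec_diagonal, colSum, ← Finset.sum_mul]
    exact Finset.sum_congr rfl fun j _ => by ring
  have hrow : ∑ i, ∑ j, W i j * z i ^ 2 = z ⬝ᵥ diagonal (colSum W) *ᵥ z := by
    rw [← hcol, Finset.sum_comm]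
    simp only [hW.apply]
  have hdouble : 2 * (z ⬝ᵥ W *ᵥ z) ≤ ∑ i, ∑ j, (W i j * z i ^ 2 + W i j * z j ^ 2) := by
    simp only [dotProduct, mulVec, Finset.mul_sum]
    exact Finset.sum_le_sum fun i _ => Finset.sum_le_sum fun j _ => hentry i j
  simp only [Finset.sum_add_distrib, hrow, hcol] at hdouble
  linarith

theorem IsPiAdjoint.piInner_mulVec_le_colSum [DecidableEq ι] {q : ι → ℝ} (hq : ∀ i, 0 < q i)
    {M : Matrix ι ι ℝ} (hM : IsPiAdjoint q q M M) (hoff : ∀ i j, i ≠ j → 0 ≤ M i j) (y : ι → ℝ) :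
    piInner q y (M *ᵥ y) ≤ piInner q y (diagonal (colSum M) *ᵥ y) := by
  set z : ι → ℝ := fun i => y i / q i
  have hy : ∀ i, y i = q i * z i := fun i => (mul_div_cancel₀ (y i) (hq i).ne').symm
  have hpair : ∀ b : ι → ℝ, piInner q y b = z ⬝ᵥ b := fun b =>
    Finset.sum_congr rfl fun i _ => mul_div_right_comm _ _ _
  have hqz : diagonal q *ᵥ z = y := by
    ext i
    rw [mulVec_diagonal, hy]
  have hsymm : (M * diagonal q).IsSymm := by
    rw [IsSymm, transpose_mul, diagonal_transpose, isPiAdjoint_iff.1 hM]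
  have hcol : colSum (M * diagonal q) = fun j => colSum M j * q j := by
    ext j
    simp only [colSum, mul_diagonal, Finset.sum_mul]
  have hoff' : ∀ i j, i ≠ j → 0 ≤ (M * diagonal q) i j := fun i j hij => by
    rw [mul_diagonal]
    exact mul_nonneg (hoff i j hij) (hq j).le
  have hle := dotProduct_mulVec_le_colSum hsymm hoff' z
  rwa [hcol, ← diagonal_mul_diagonal, ← mulVec_mulVec, ← mulVec_mulVec, hqz, ← hpair, ← hpair]
    at hle

-- The nonnegative vector `A x⁺` has nonpositive total mass, so it vanishes.
theorem nonpos_of_mulVec_nonneg [DecidableEq ι] {A : Matrix ι ι ℝ}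
    (hoff : ∀ i j, i ≠ j → 0 ≤ A i j) (hcol : ∀ j, colSum A j ≤ 0) (hA : IsUnit A.det)
    {x : ι → ℝ} (hx : 0 ≤ A *ᵥ x) : x ≤ 0 := by
  have hAx : 0 ≤ A *ᵥ x⁺ := by
    intro i
    rcases le_total (x i) 0 with hi | hi
    · refine Finset.sum_nonneg fun j _ => ?_
      obtain rfl | hij := eq_or_ne i j
      · simp [hi]
      · exact mul_nonneg (hoff i j hij) (posPart_nonneg (x : ι → ℝ) j)
    · refine (hx i).trans (Finset.sum_le_sum fun j _ => ?_)
      obtain rfl | hij := eq_or_ne i j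
      · simp [hi]
      · exact mul_le_mul_of_nonneg_left (le_posPart _) (hoff i j hij)
  have hmass : ∑ i, (A *ᵥ x⁺) i ≤ 0 := by
    simp only [mulVec, dotProduct]
    rw [Finset.sum_comm]
    simp only [← Finset.sum_mul]
    exact Finset.sum_nonpos fun j _ =>
      mul_nonpos_of_nonpos_of_nonneg (hcol j) (posPart_nonneg (x : ι → ℝ) j)
  have hzero : A *ᵥ x⁺ = 0 :=
    (Fintype.sum_eq_zero_iff_of_nonneg hAx).1
      (le_antisymm hmass (Finset.sum_nonneg fun i _ => hAx i))
  exact posPart_eq_zero.1 (eq_zero_of_mulVec_eq_zero hA.ne_zero hzero)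

theorem inv_nonpos_of_colSum_nonpos [DecidableEq ι] {A : Matrix ι ι ℝ}
    (hoff : ∀ i j, i ≠ j → 0 ≤ A i j) (hcol : ∀ j, colSum A j ≤ 0) (hA : IsUnit A.det) (i j : ι) :
    A⁻¹ i j ≤ 0 := by
  refine nonpos_of_mulVec_nonneg hoff hcol hA (x := A⁻¹.col j) (fun k => ?_) i
  have hcolumn : (A *ᵥ A⁻¹.col j) k = (A * A⁻¹) k j := rfl
  rw [hcolumn, mul_nonsing_inv _ hA, one_apply, Pi.zero_apply]
  split_ifs <;> norm_num

end ColumnSums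

section SchurReduction

variable {σ τ : Type*} [Fintype σ] [DecidableEq σ] {K : Matrix (σ ⊕ τ) (σ ⊕ τ) ℝ}
  {w : σ ⊕ τ → ℝ}

/-- The Schur complement `D = K_TT - K_TS K_SS⁻¹ K_ST`. -/
noncomputable def schurComplement (K : Matrix (σ ⊕ τ) (σ ⊕ τ) ℝ) : Matrix τ τ ℝ :=
  K.toBlocks₂₂ - K.toBlocks₂₁ * K.toBlocks₁₁⁻¹ * K.toBlocks₁₂

theorem isPiAdjoint_schurComplement (hdb : IsPiAdjoint w w K K) (hK : IsUnit K.toBlocks₁₁.det) :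
    IsPiAdjoint (w ∘ Sum.inr) (w ∘ Sum.inr) (schurComplement K) (schurComplement K) := by
  have h₁₁ : IsPiAdjoint (w ∘ Sum.inl) (w ∘ Sum.inl) K.toBlocks₁₁ K.toBlocks₁₁ := fun i j =>
    hdb (.inl i) (.inl j)
  have h₁₂ : IsPiAdjoint (w ∘ Sum.inl) (w ∘ Sum.inr) K.toBlocks₁₂ K.toBlocks₂₁ := fun i j =>
    hdb (.inl i) (.inr j)
  have h₂₁ : IsPiAdjoint (w ∘ Sum.inr) (w ∘ Sum.inl) K.toBlocks₂₁ K.toBlocks₁₂ := fun i j =>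
    hdb (.inr i) (.inl j)
  have h₂₂ : IsPiAdjoint (w ∘ Sum.inr) (w ∘ Sum.inr) K.toBlocks₂₂ K.toBlocks₂₂ := fun i j =>
    hdb (.inr i) (.inr j)
  rw [schurComplement]
  nth_rw 2 [Matrix.mul_assoc]
  exact h₂₂.sub ((h₂₁.mul (h₁₁.inv hK)).mul h₁₂)

variable [DecidableEq τ]

/-- The matrix `Ω = (-K_TS K_SS⁻¹, 1)`, for index sets `S = σ` and `T = τ`. -/
noncomputable def schurRestriction (K : Matrix (σ ⊕ τ) (σ ⊕ τ) ℝ) :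
    Matrix τ (σ ⊕ τ) ℝ :=
  fromCols (-(K.toBlocks₂₁ * K.toBlocks₁₁⁻¹)) 1

/-- The matrix `Ω*`, stacking `-K_SS⁻¹ K_ST` over `1`. -/
noncomputable def schurProlongation (K : Matrix (σ ⊕ τ) (σ ⊕ τ) ℝ) :
    Matrix (σ ⊕ τ) τ ℝ :=
  fromRows (-(K.toBlocks₁₁⁻¹ * K.toBlocks₁₂)) 1

/-- The matrix `M = 1 + K_TS K_SS⁻² K_ST`. -/
noncomputable def schurGram (K : Matrix (σ ⊕ τ) (σ ⊕ τ) ℝ) : Matrix τ τ ℝ :=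
  1 + K.toBlocks₂₁ * K.toBlocks₁₁⁻¹ * K.toBlocks₁₁⁻¹ * K.toBlocks₁₂

theorem schurGram_nonneg_of_ne (hoff : ∀ i j, i ≠ j → 0 ≤ K.toBlocks₁₁ i j)
    (hcol : ∀ j, colSum K.toBlocks₁₁ j ≤ 0) (hK : IsUnit K.toBlocks₁₁.det)
    (h₁₂ : ∀ i j, 0 ≤ K.toBlocks₁₂ i j) (h₂₁ : ∀ i j, 0 ≤ K.toBlocks₂₁ i j) {i j : τ}
    (hij : i ≠ j) : 0 ≤ schurGram K i j := by
  have hinv := inv_nonpos_of_colSum_nonpos hoff hcol hK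
  rw [schurGram, Matrix.mul_assoc (K.toBlocks₂₁ * _), Matrix.add_apply, one_apply_ne hij, zero_add,
    mul_apply]
  refine Finset.sum_nonneg fun k _ => mul_nonneg_of_nonpos_of_nonpos ?_ ?_
  · exact Finset.sum_nonpos fun l _ => mul_nonpos_of_nonneg_of_nonpos (h₂₁ i l) (hinv l k)
  · exact Finset.sum_nonpos fun l _ => mul_nonpos_of_nonpos_of_nonneg (hinv k l) (h₁₂ l j)

theorem isPiAdjoint_schurProlongation (hdb : IsPiAdjoint w w K K) (hK : IsUnit K.toBlocks₁₁.det) :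
    IsPiAdjoint w (w ∘ Sum.inr) (schurProlongation K) (schurRestriction K) := by
  have h₁₁ : IsPiAdjoint (w ∘ Sum.inl) (w ∘ Sum.inl) K.toBlocks₁₁ K.toBlocks₁₁ := fun i j =>
    hdb (.inl i) (.inl j)
  have h₁₂ : IsPiAdjoint (w ∘ Sum.inl) (w ∘ Sum.inr) K.toBlocks₁₂ K.toBlocks₂₁ := fun i j =>
    hdb (.inl i) (.inr j)
  rintro (i | i) j
  · simpa [schurProlongation, schurRestriction] using ((h₁₁.inv hK).mul h₁₂) i j
  · obtain rfl | hij := eq_or_ne i j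
    · simp [schurProlongation, schurRestriction, mul_comm]
    · simp [schurProlongation, schurRestriction, hij, hij.symm]

variable [Fintype τ]

theorem schurRestriction_mul_schurProlongation (K : Matrix (σ ⊕ τ) (σ ⊕ τ) ℝ) :
    schurRestriction K * schurProlongation K = schurGram K := by
  rw [schurRestriction, schurProlongation, fromCols_mul_fromRows, Matrix.neg_mul,
    Matrix.mul_neg, neg_neg, Matrix.one_mul, add_comm, schurGram]
  simp only [Matrix.mul_assoc]

theorem schurProlongation_mul_mul_schurRestriction (K : Matrix (σ ⊕ τ) (σ ⊕ τ) ℝ)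
    (X : Matrix τ τ ℝ) :
    schurProlongation K * X * schurRestriction K =
      fromBlocks (K.toBlocks₁₁⁻¹ * K.toBlocks₁₂ * X * K.toBlocks₂₁ * K.toBlocks₁₁⁻¹)
        (-(K.toBlocks₁₁⁻¹ * K.toBlocks₁₂ * X)) (-(X * K.toBlocks₂₁ * K.toBlocks₁₁⁻¹)) X := by
  rw [schurProlongation, schurRestriction, fromRows_mul, fromRows_mul_fromCols]
  simp only [Matrix.neg_mul, Matrix.mul_neg, neg_neg, Matrix.one_mul, Matrix.mul_one,
    Matrix.mul_assoc]

theorem schurRestriction_mul (hK : IsUnit K.toBlocks₁₁.det) :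
    schurRestriction K * K = fromCols 0 (schurComplement K) := by
  conv_lhs => rw [← fromBlocks_toBlocks K]
  rw [schurRestriction, toBlocks_fromBlocks₂₁, toBlocks_fromBlocks₁₁, fromCols_mul_fromBlocks,
    schurComplement, Matrix.neg_mul, Matrix.neg_mul, nonsing_inv_mul_cancel_right _ _ hK,
    Matrix.one_mul, Matrix.one_mul, neg_add_cancel, neg_add_eq_sub]

theorem schurComplement_mulVec (hK : IsUnit K.toBlocks₁₁.det) {lam : ℝ} {u : σ ⊕ τ → ℝ}
    (heig : K *ᵥ u = lam • u) :
    schurComplement K *ᵥ (u ∘ Sum.inr) = lam • schurRestriction K *ᵥ u := by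
  rw [← mulVec_smul, ← heig, mulVec_mulVec, schurRestriction_mul hK, fromCols_mulVec, zero_mulVec,
    zero_add]

theorem piInner_schurGram (hw : ∀ i, 0 < w i) (hdb : IsPiAdjoint w w K K)
    (hK : IsUnit K.toBlocks₁₁.det) (y : τ → ℝ) :
    piInner (w ∘ Sum.inr) y (schurGram K *ᵥ y) =
      piInner w (schurProlongation K *ᵥ y) (schurProlongation K *ᵥ y) := by
  rw [(isPiAdjoint_schurProlongation hdb hK).piInner_mulVec_left hw (fun j => hw (.inr j)),
    mulVec_mulVec, schurRestriction_mul_schurProlongation]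

theorem piInner_self_le_schurGram (hw : ∀ i, 0 < w i) (hdb : IsPiAdjoint w w K K)
    (hK : IsUnit K.toBlocks₁₁.det) (y : τ → ℝ) :
    piInner (w ∘ Sum.inr) y y ≤ piInner (w ∘ Sum.inr) y (schurGram K *ᵥ y) := by
  have hy : (schurProlongation K *ᵥ y) ∘ Sum.inr = y := by
    rw [schurProlongation, fromRows_mulVec, Sum.elim_comp_inr, one_mulVec]
  rw [piInner_schurGram hw hdb hK]
  simpa only [hy] using piInner_comp_inr_self_le hw (schurProlongation K *ᵥ y)

theorem piInner_schurGram_le_colSum (hw : ∀ i, 0 < w i) (hdb : IsPiAdjoint w w K K)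
    (hK : IsUnit K.toBlocks₁₁.det) (hoff : ∀ i j, Sum.inl i ≠ j → 0 ≤ K (.inl i) j)
    (hcol : ∀ j, colSum K (.inl j) ≤ 0) (y : τ → ℝ) :
    piInner (w ∘ Sum.inr) y (schurGram K *ᵥ y) ≤
      piInner (w ∘ Sum.inr) y (diagonal (colSum (schurGram K)) *ᵥ y) := by
  have hP := isPiAdjoint_schurProlongation hdb hK
  have h₁₂ : ∀ i j, 0 ≤ K.toBlocks₁₂ i j := fun i j => hoff i (.inr j) Sum.inl_ne_inr
  have h₂₁ : ∀ j i, 0 ≤ K.toBlocks₂₁ j i := fun j i =>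
    hdb.nonneg_of_nonneg (hw _) (hw _) (h₁₂ i j)
  have hcol₁₁ : ∀ j, colSum K.toBlocks₁₁ j ≤ 0 := fun j => by
    have hsplit := Fintype.sum_sum_type fun i => K i (.inl j)
    have hcross : 0 ≤ ∑ i, K (.inr i) (.inl j) := Finset.sum_nonneg fun i _ => h₂₁ i j
    have hj := hcol j
    rw [colSum, hsplit] at hj
    exact (le_add_of_nonneg_right hcross).trans hj
  have hM : IsPiAdjoint (w ∘ Sum.inr) (w ∘ Sum.inr) (schurGram K) (schurGram K) := by
    rw [← schurRestriction_mul_schurProlongation]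
    exact hP.symm.mul hP
  exact hM.piInner_mulVec_le_colSum (fun j => hw (.inr j))
    (fun i j => schurGram_nonneg_of_ne (fun i j hij => hoff i (.inl j) (Sum.inl_injective.ne hij))
      hcol₁₁ hK h₁₂ h₂₁) y

theorem abs_mul_pinorm_mulVec_le (hw : ∀ i, 0 < w i) (hdb : IsPiAdjoint w w K K)
    (hK : IsUnit K.toBlocks₁₁.det) {N : Matrix τ τ ℝ}
    (hN : ∀ y, piInner (w ∘ Sum.inr) y (schurGram K *ᵥ y) ≤ piInner (w ∘ Sum.inr) y (N *ᵥ y))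
    {lam : ℝ} {u : σ ⊕ τ → ℝ} (heig : K *ᵥ u = lam • u) :
    |lam| * pinorm w ((schurProlongation K * N⁻¹ * schurRestriction K) *ᵥ u) ≤
      realSpectralRadius (schurComplement K) * pinorm w u := by
  have hq : ∀ j, 0 < (w ∘ Sum.inr) j := fun j => hw (.inr j)
  set x := schurRestriction K *ᵥ u
  have hVu : pinorm w ((schurProlongation K * N⁻¹ * schurRestriction K) *ᵥ u) ≤
      pinorm (w ∘ Sum.inr) x := by
    rw [← mulVec_mulVec, ← mulVec_mulVec, pinorm_eq_sqrt_piInner, pinorm_eq_sqrt_piInner,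
      ← piInner_schurGram hw hdb hK]
    exact Real.sqrt_le_sqrt
      (piInner_inv_mulVec_le hq (piInner_self_le_schurGram hw hdb hK) hN x)
  calc |lam| * pinorm w ((schurProlongation K * N⁻¹ * schurRestriction K) *ᵥ u)
      ≤ |lam| * pinorm (w ∘ Sum.inr) x := mul_le_mul_of_nonneg_left hVu (abs_nonneg lam)
    _ = pinorm (w ∘ Sum.inr) (schurComplement K *ᵥ (u ∘ Sum.inr)) := by
        rw [schurComplement_mulVec hK heig, pinorm_smul]
    _ ≤ realSpectralRadius (schurComplement K) * pinorm (w ∘ Sum.inr) (u ∘ Sum.inr) :=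
        (isPiAdjoint_schurComplement hdb hK).pinorm_mulVec_le hq _
    _ ≤ realSpectralRadius (schurComplement K) * pinorm w u :=
        mul_le_mul_of_nonneg_left (pinorm_comp_inr_le hw u) (realSpectralRadius_nonneg _)

end SchurReduction

section Assembly

theorem submatrix_mulVec_comp_equiv {ι κ : Type*} [Fintype ι] [Fintype κ] (A : Matrix ι ι ℝ)
    (e : κ ≃ ι) (a : ι → ℝ) : A.submatrix e e *ᵥ (a ∘ e) = (A *ᵥ a) ∘ e := by
  rw [submatrix_mulVec_equiv, Function.comp_assoc, e.self_comp_symm, Function.comp_id]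

variable {n : ℕ} (S : Finset (Fin n))

/-- The decomposition of the index set into `S` (left) and its complement `T` (right). -/
noncomputable def sumComplEquiv : ↥S ⊕ ↥(Sᶜ) ≃ Fin n :=
  Equiv.ofBijective (Sum.elim (↑) (↑)) <| by
    constructor
    · exact Subtype.val_injective.sumElim Subtype.val_injective fun i j h =>
        Finset.mem_compl.1 j.2 (h ▸ i.2)
    · intro i
      by_cases hi : i ∈ S
      · exact ⟨.inl ⟨i, hi⟩, rfl⟩
      · exact ⟨.inr ⟨i, Finset.mem_compl.2 hi⟩, rfl⟩

theorem sumComplEquiv_inl (i : ↥S) : sumComplEquiv S (.inl i) = i := rfl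

theorem sumComplEquiv_inr (j : ↥(Sᶜ)) : sumComplEquiv S (.inr j) = j := rfl

theorem rcmcAssemble_submatrix_sumComplEquiv (A : Matrix ↥S ↥S ℝ) (B : Matrix ↥S ↥(Sᶜ) ℝ)
    (C : Matrix ↥(Sᶜ) ↥S ℝ) (G : Matrix ↥(Sᶜ) ↥(Sᶜ) ℝ) :
    (rcmcAssemble S A B C G).submatrix (sumComplEquiv S) (sumComplEquiv S) =
      fromBlocks A B C G := by
  have hT : ∀ j : ↥(Sᶜ), (j : Fin n) ∉ S := fun j => Finset.mem_compl.1 j.2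
  ext (i | i) (j | j) <;> simp [sumComplEquiv_inl, sumComplEquiv_inr, rcmcAssemble, hT]

end Assembly

theorem rcmc_stmt15_general (n : ℕ) (K : Matrix (Fin n) (Fin n) ℝ) (π : Fin n → ℝ)
    (S : Finset (Fin n))
    (hoff : ∀ i ∈ S, ∀ j, i ≠ j → 0 ≤ K i j)
    (hcol : ∀ j ∈ S, ∑ i, K i j ≤ 0)
    (hπpos : ∀ i, 0 < π i)
    (hdb : K * Matrix.diagonal π = Matrix.diagonal π * Kᵀ)
    (hinv : IsUnit (K.submatrix ((↑) : ↥S → Fin n) ((↑) : ↥S → Fin n)).det)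
    (M VTT : Matrix ↥(Sᶜ) ↥(Sᶜ) ℝ)
    (hM : M = 1 + K.submatrix ((↑) : ↥(Sᶜ) → Fin n) ((↑) : ↥S → Fin n)
      * (K.submatrix ((↑) : ↥S → Fin n) ((↑) : ↥S → Fin n))⁻¹
      * (K.submatrix ((↑) : ↥S → Fin n) ((↑) : ↥S → Fin n))⁻¹
      * K.submatrix ((↑) : ↥S → Fin n) ((↑) : ↥(Sᶜ) → Fin n))
    (hVTT : VTT = (Matrix.diagonal (fun j : ↥(Sᶜ) => ∑ i : ↥(Sᶜ), M i j))⁻¹ ∨ VTT = M⁻¹)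
    (lam : ℝ) (u : Fin n → ℝ)
    (heig : K.mulVec u = lam • u) (hlam : lam ≠ 0) :
    let KSS := K.submatrix ((↑) : ↥S → Fin n) ((↑) : ↥S → Fin n)
    let KST := K.submatrix ((↑) : ↥S → Fin n) ((↑) : ↥(Sᶜ) → Fin n)
    let KTS := K.submatrix ((↑) : ↥(Sᶜ) → Fin n) ((↑) : ↥S → Fin n)
    let KTT := K.submatrix ((↑) : ↥(Sᶜ) → Fin n) ((↑) : ↥(Sᶜ) → Fin n)
    let D := KTT - KTS * KSS⁻¹ * KST
    let ρD := sSup {r : ℝ | ∃ μ ∈ spectrum ℝ D, r = |μ|}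
    let V := rcmcAssemble S (KSS⁻¹ * KST * VTT * KTS * KSS⁻¹)
      (-(KSS⁻¹ * KST * VTT)) (-(VTT * KTS * KSS⁻¹)) VTT
    pinorm π (V.mulVec u) ≤ ρD / |lam| * pinorm π u := by
  intro KSS KST KTS KTT D ρD V
  let e := sumComplEquiv S
  let L := K.submatrix e e
  have hw : ∀ i, 0 < (π ∘ e) i := fun i => hπpos (e i)
  have hL : IsPiAdjoint (π ∘ e) (π ∘ e) L L := fun i j => isPiAdjoint_iff.2 hdb (e i) (e j)
  have hgram : schurGram L = M := hM.symm
  obtain ⟨N, hN, hVN⟩ : ∃ N : Matrix ↥(Sᶜ) ↥(Sᶜ) ℝ,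
      (∀ y, piInner ((π ∘ e) ∘ Sum.inr) y (schurGram L *ᵥ y) ≤
        piInner ((π ∘ e) ∘ Sum.inr) y (N *ᵥ y)) ∧ VTT = N⁻¹ := by
    rcases hVTT with hA | hB
    · refine ⟨diagonal (colSum (schurGram L)), piInner_schurGram_le_colSum hw hL hinv
        (fun i j hij => hoff i i.2 (e j) (e.injective.ne hij))
        (fun j => (e.sum_comp fun i => K i j).trans_le (hcol j j.2)), ?_⟩
      rw [hgram]
      exact hA
    · exact ⟨schurGram L, fun _ => le_rfl, hgram ▸ hB⟩
  have heigL : L *ᵥ (u ∘ e) = lam • (u ∘ e) := by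
    rw [submatrix_mulVec_comp_equiv, heig]
    rfl
  have hVL : V.submatrix e e = schurProlongation L * N⁻¹ * schurRestriction L := by
    rw [rcmcAssemble_submatrix_sumComplEquiv, schurProlongation_mul_mul_schurRestriction, ← hVN]
    rfl
  have hbound := abs_mul_pinorm_mulVec_le hw hL hinv hN heigL
  rw [← hVL, submatrix_mulVec_comp_equiv, pinorm_comp_equiv, pinorm_comp_equiv] at hbound
  rw [div_mul_eq_mul_div, le_div_iff₀' (abs_pos.2 hlam)]
  exact hbound

/-- For an eigenpair `(λ, u)` of `K` with `‖u‖_π = 1` and `λ < 0`, and the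
Schur complement `D = K_TT − K_TS K_SS⁻¹ K_ST`, the matrix `V` of either Type A or B
satisfies `‖Vu‖_π ≤ ρ(D)/|λ|` where `ρ(D)` is the spectral radius of `D`. -/
theorem rcmc_stmt15 (n : ℕ) (K : Matrix (Fin n) (Fin n) ℝ) (π : Fin n → ℝ)
    (hoff : ∀ i j, i ≠ j → 0 ≤ K i j)
    (hcol : ∀ j, ∑ i, K i j = 0)
    (hπpos : ∀ i, 0 < π i) (hπsum : ∑ i, π i = 1)
    (hdb : K * Matrix.diagonal π = Matrix.diagonal π * Kᵀ)
    (S : Finset (Fin n))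
    (hinv : IsUnit (K.submatrix ((↑) : ↥S → Fin n) ((↑) : ↥S → Fin n)).det)
    (M VTT : Matrix ↥(Sᶜ) ↥(Sᶜ) ℝ)
    (hM : M = 1 + K.submatrix ((↑) : ↥(Sᶜ) → Fin n) ((↑) : ↥S → Fin n)
      * (K.submatrix ((↑) : ↥S → Fin n) ((↑) : ↥S → Fin n))⁻¹
      * (K.submatrix ((↑) : ↥S → Fin n) ((↑) : ↥S → Fin n))⁻¹
      * K.submatrix ((↑) : ↥S → Fin n) ((↑) : ↥(Sᶜ) → Fin n))
    (hVTT : VTT = (Matrix.diagonal (fun j : ↥(Sᶜ) => ∑ i : ↥(Sᶜ), M i j))⁻¹ ∨ VTT = M⁻¹)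
    (lam : ℝ) (u : Fin n → ℝ)
    (heig : K.mulVec u = lam • u) (hlam : lam < 0) (hu : pinorm π u = 1) :
    let KSS := K.submatrix ((↑) : ↥S → Fin n) ((↑) : ↥S → Fin n)
    let KST := K.submatrix ((↑) : ↥S → Fin n) ((↑) : ↥(Sᶜ) → Fin n)
    let KTS := K.submatrix ((↑) : ↥(Sᶜ) → Fin n) ((↑) : ↥S → Fin n)
    let KTT := K.submatrix ((↑) : ↥(Sᶜ) → Fin n) ((↑) : ↥(Sᶜ) → Fin n)
    let D := KTT - KTS * KSS⁻¹ * KST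
    let ρD := sSup {r : ℝ | ∃ μ ∈ spectrum ℝ D, r = |μ|}
    let V := rcmcAssemble S (KSS⁻¹ * KST * VTT * KTS * KSS⁻¹)
      (-(KSS⁻¹ * KST * VTT)) (-(VTT * KTS * KSS⁻¹)) VTT
    pinorm π (V.mulVec u) ≤ ρD / |lam| := by
  simpa only [hu, mul_one] using rcmc_stmt15_general n K π S (fun i _ => hoff i)
    (fun j _ => (hcol j).le) hπpos hdb hinv M VTT hM hVTT lam u heig hlam.ne
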